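/- Let (x, y) ∈ E × E with max(v₁, w₁)·δ < dist(x, ∂E) and w₁·δ < dist(y, ∂E). If p(x) > 0, α·d < 1 and 8·β·d < 1, then q̂ₙ(x, y) → q(x, y) almost surely as n → ∞. -/

import Mathlib

open MeasureTheory ProbabilityTheory Filter

noncomputable def iterK {S : Type*} [MeasurableSpace S] (R : S → Measure S) : ℕ → S → Measure S
  | 0, y => Measure.dirac y
  | n+1, y => (iterK R n y).bind R

/-! The numerator and the denominator of the estimator are sums of nonnegative terms
`Yⱼ ≤ A j ^ s` with `s < 1` and bounded means. For `i ≤ j` the covariance of `Yᵢ` and `Yⱼ` is at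
most `C j ^ s`, by nonnegativity, and at most `C j ^ (2 s) t ^ (j - i)` with `t < 1`, by mixing.
Interpolating geometrically between the two costs only a factor `j ^ (s θ)`, with `θ > 0` as small
as desired, and keeps the exponential decay, so that the `n`-th partial sum has variance
`O(n ^ (1 + s'))` with `s' < 1`. Along geometric subsequences the variances of the averages are
therefore summable, which gives the strong law there, and monotonicity of the partial sums fills
the gaps.

It remains to find the limits of the means. The rescaled kernels are an approximate identity, so
conditioning on the preceding variable replaces them by the densities `r` and `q`; the ergodicity
of the chain then yields `p x` for the denominator and `p x * q x y` for the numerator. -/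

section LawOfLargeNumbers

open Topology

theorem sum_range_pow_natDist_le {t : ℝ} (ht0 : 0 ≤ t) (ht1 : t < 1) (i n : ℕ) :
    ∑ j ∈ Finset.range n, t ^ Nat.dist i j ≤ 2 * (1 - t)⁻¹ := by
  have geom_le (m : ℕ) : ∑ l ∈ Finset.range m, t ^ l ≤ (1 - t)⁻¹ :=
    tsum_geometric_of_lt_one ht0 ht1 ▸
      (summable_geometric_of_lt_one ht0 ht1).sum_le_tsum _ fun l _ => pow_nonneg ht0 l
  calc ∑ j ∈ Finset.range n, t ^ Nat.dist i j
      ≤ ∑ j ∈ Finset.range (i + 1 + n), t ^ Nat.dist i j :=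
        Finset.sum_le_sum_of_subset_of_nonneg (Finset.range_mono (Nat.le_add_left _ _))
          fun _ _ _ => pow_nonneg ht0 _
    _ ≤ ∑ j ∈ Finset.range (i + 1), t ^ (i - j) + ∑ l ∈ Finset.range n, t ^ l := by
        rw [Finset.sum_range_add]
        refine add_le_add (Finset.sum_le_sum fun j hj => ?_) (Finset.sum_le_sum fun l _ => ?_)
        · rw [Nat.dist_eq_sub_of_le_right (Finset.mem_range_succ_iff.1 hj)]
        · exact pow_le_pow_of_le_one ht0 ht1.le (by simp only [Nat.dist]; omega)
    _ ≤ 2 * (1 - t)⁻¹ := by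
        rw [Finset.sum_flip (fun l => t ^ l), two_mul]
        exact add_le_add (geom_le _) (geom_le _)

variable {Ω : Type*} [MeasurableSpace Ω] {P : Measure Ω} [IsProbabilityMeasure P]

theorem ae_tendsto_sub_integral_of_summable_variance {X : ℕ → Ω → ℝ}
    (hX : ∀ k, MemLp (X k) 2 P) (hsum : Summable fun k => Var[X k; P]) :
    ∀ᵐ ω ∂P, Tendsto (fun k => X k ω - ∫ ω', X k ω' ∂P) atTop (𝓝 0) := by
  set F : ℕ → Ω → ENNReal := fun k ω => ‖X k ω - ∫ ω', X k ω' ∂P‖ₑ ^ 2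
  have hF (k : ℕ) : AEMeasurable (F k) P :=
    ((hX k).aestronglyMeasurable.aemeasurable.sub_const _).enorm.pow_const 2
  have hfin : ∫⁻ ω, ∑' k, F k ω ∂P ≠ ⊤ := by
    rw [lintegral_tsum hF]
    calc ∑' k, ∫⁻ ω, F k ω ∂P = ∑' k, ENNReal.ofReal Var[X k; P] :=
          tsum_congr fun k => (hX k).ofReal_variance_eq.symm
      _ ≠ ⊤ := hsum.tsum_ofReal_ne_top
  filter_upwards [ae_lt_top' (AEMeasurable.tsum hF) hfin] with ω hω
  rw [tendsto_zero_iff_enorm_tendsto_zero]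
  have hsq := ENNReal.tendsto_atTop_zero_of_tsum_ne_top hω.ne
  simpa only [F, ENNReal.pow_rpow_inv_natCast two_ne_zero,
    ENNReal.zero_rpow_of_pos (inv_pos.2 (Nat.cast_pos.2 two_pos))]
    using hsq.ennrpow_const (((2 : ℕ) : ℝ)⁻¹)

theorem variance_sum_range_le_of_abs_covariance_le {Y : ℕ → Ω → ℝ} (hY : ∀ j, MemLp (Y j) 2 P)
    {C s t : ℝ} (hs : 0 ≤ s) (ht0 : 0 ≤ t) (ht1 : t < 1)
    (hcov : ∀ i j, i ≤ j → |cov[Y i, Y j; P]| ≤ C * ((j : ℝ) + 1) ^ s * t ^ (j - i)) (n : ℕ) :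
    Var[∑ j ∈ Finset.range n, Y j; P] ≤ C * (2 * (1 - t)⁻¹) * (n : ℝ) ^ (1 + s) := by
  have hC : 0 ≤ C := by simpa using (abs_nonneg _).trans (hcov 0 0 le_rfl)
  have hcov' {i j : ℕ} (hij : i ≤ j) (hj : j < n) :
      cov[Y i, Y j; P] ≤ C * (n : ℝ) ^ s * t ^ Nat.dist i j := by
    refine (le_abs_self _).trans ((hcov i j hij).trans ?_)
    rw [Nat.dist_eq_sub_of_le hij]
    gcongr
    exact_mod_cast hj
  calc Var[∑ j ∈ Finset.range n, Y j; P]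
      = ∑ i ∈ Finset.range n, ∑ j ∈ Finset.range n, cov[Y i, Y j; P] :=
        variance_sum' fun j _ => hY j
    _ ≤ ∑ i ∈ Finset.range n, ∑ j ∈ Finset.range n, C * (n : ℝ) ^ s * t ^ Nat.dist i j := by
        refine Finset.sum_le_sum fun i hi => Finset.sum_le_sum fun j hj => ?_
        rcases le_total i j with hij | hji
        · exact hcov' hij (Finset.mem_range.1 hj)
        · rw [covariance_comm, Nat.dist_comm]
          exact hcov' hji (Finset.mem_range.1 hi)
    _ ≤ ∑ _i ∈ Finset.range n, C * (n : ℝ) ^ s * (2 * (1 - t)⁻¹) := by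
        refine Finset.sum_le_sum fun i _ => ?_
        rw [← Finset.mul_sum]
        gcongr
        exact sum_range_pow_natDist_le ht0 ht1 i n
    _ = C * (2 * (1 - t)⁻¹) * (n : ℝ) ^ (1 + s) := by
        rw [Finset.sum_const, Finset.card_range, nsmul_eq_mul,
          Real.rpow_add_of_nonneg n.cast_nonneg zero_le_one hs, Real.rpow_one]
        ring

theorem summable_natFloor_pow_rpow {c : ℝ} (hc : 1 < c) {s : ℝ} (hs : s < 0) :
    Summable fun k : ℕ => ((⌊c ^ k⌋₊ : ℕ) : ℝ) ^ s := by
  have hc0 : 0 < c := one_pos.trans hc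
  have hc1 : 0 < 1 - c⁻¹ := sub_pos.2 (inv_lt_one_of_one_lt₀ hc)
  have hgeom : Summable fun k : ℕ => (1 - c⁻¹) ^ s * (c ^ s) ^ k :=
    (summable_geometric_of_lt_one (by positivity)
      (Real.rpow_lt_one_of_one_lt_of_neg hc hs)).mul_left _
  refine hgeom.of_nonneg_of_le (fun k => by positivity) fun k => ?_
  calc ((⌊c ^ k⌋₊ : ℕ) : ℝ) ^ s ≤ ((1 - c⁻¹) * c ^ k) ^ s :=
        Real.rpow_le_rpow_of_nonpos (by positivity) (mul_pow_le_nat_floor_pow hc k) hs.le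
    _ = (1 - c⁻¹) ^ s * (c ^ s) ^ k := by
        rw [Real.mul_rpow hc1.le (by positivity), ← Real.rpow_natCast, ← Real.rpow_natCast,
          ← Real.rpow_mul hc0.le, ← Real.rpow_mul hc0.le, mul_comm s]

theorem ae_tendsto_average_of_variance_le {Y : ℕ → Ω → ℝ} (hY : ∀ j, MemLp (Y j) 2 P)
    (hY0 : ∀ j ω, 0 ≤ Y j ω) {D s l : ℝ} (hs : s < 2)
    (hvar : ∀ n : ℕ, Var[∑ j ∈ Finset.range n, Y j; P] ≤ D * (n : ℝ) ^ s)
    (hmean : Tendsto (fun j => ∫ ω, Y j ω ∂P) atTop (𝓝 l)) :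
    ∀ᵐ ω ∂P, Tendsto (fun n : ℕ => (∑ j ∈ Finset.range n, Y j ω) / n) atTop (𝓝 l) := by
  set A : ℕ → Ω → ℝ := fun n ω => (n : ℝ)⁻¹ * (∑ j ∈ Finset.range n, Y j) ω with hA
  have hA2 (n : ℕ) : MemLp (A n) 2 P := (memLp_finsetSum' _ fun j _ => hY j).const_mul _
  have hAmean : Tendsto (fun n => ∫ ω, A n ω ∂P) atTop (𝓝 l) := by
    refine hmean.cesaro.congr fun n => ?_
    simp only [hA, Finset.sum_apply]
    rw [integral_const_mul, integral_finsetSum _ fun j _ => (hY j).integrable one_le_two]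
  have hsub {c : ℝ} (hc : 1 < c) :
      ∀ᵐ ω ∂P, Tendsto (fun k : ℕ => A ⌊c ^ k⌋₊ ω) atTop (𝓝 l) := by
    have hAvar (n : ℕ) (hn : 0 < n) : Var[A n; P] ≤ D * (n : ℝ) ^ (s - 2) := by
      rw [hA, variance_const_mul, Real.rpow_sub (by exact_mod_cast hn), Real.rpow_two, inv_pow,
        inv_mul_eq_div, ← mul_div_assoc]
      gcongr
      exact hvar n
    have hsum : Summable fun k : ℕ => Var[A ⌊c ^ k⌋₊; P] :=
      ((summable_natFloor_pow_rpow hc (sub_neg.2 hs)).mul_left D).of_nonneg_of_le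
        (fun k => variance_nonneg _ _)
        (fun k => hAvar _ (Nat.floor_pos.2 (one_le_pow₀ hc.le)))
    filter_upwards [ae_tendsto_sub_integral_of_summable_variance (fun k => hA2 ⌊c ^ k⌋₊) hsum]
      with ω hω
    have hfloor := tendsto_nat_floor_atTop.comp (tendsto_pow_atTop_atTop_of_one_lt hc)
    simpa using hω.add (hAmean.comp hfloor)
  have hc (m : ℕ) : 1 < 1 + 1 / ((m : ℝ) + 1) := lt_add_of_pos_right _ (by positivity)
  filter_upwards [ae_all_iff.2 fun m : ℕ => hsub (hc m)] with ω hω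
  refine tendsto_div_of_monotone_of_tendsto_div_floor_pow _ l
    (fun m n hmn => Finset.sum_le_sum_of_subset_of_nonneg (Finset.range_mono hmn)
      fun j _ _ => hY0 j ω) (fun m : ℕ => 1 + 1 / ((m : ℝ) + 1)) hc
    (by simpa using tendsto_const_nhds.add (tendsto_one_div_add_atTop_nhds_zero_nat (𝕜 := ℝ)))
    fun m => (hω m).congr fun k => ?_
  simp only [hA, Finset.sum_apply, inv_mul_eq_div]

theorem abs_covariance_le_of_nonneg_of_le {X Y : Ω → ℝ} (hX : Measurable X) (hY : MemLp Y 2 P)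
    {a : ℝ} (hX0 : ∀ ω, 0 ≤ X ω) (hXa : ∀ ω, X ω ≤ a) (hY0 : ∀ ω, 0 ≤ Y ω) :
    |cov[X, Y; P]| ≤ a * ∫ ω, Y ω ∂P := by
  have hX2 : MemLp X 2 P :=
    .of_bound hX.aestronglyMeasurable a (ae_of_all _ fun ω => by
      simpa only [Real.norm_of_nonneg (hX0 ω)] using hXa ω)
  have hYint : Integrable Y P := hY.integrable one_le_two
  rw [covariance_eq_sub hX2 hY]
  refine abs_sub_le_of_nonneg_of_le (integral_nonneg fun ω => mul_nonneg (hX0 ω) (hY0 ω)) ?_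
    (mul_nonneg (integral_nonneg hX0) (integral_nonneg hY0)) ?_
  · rw [← integral_const_mul]
    exact integral_mono (hX2.integrable_mul hY) (hYint.const_mul a)
      fun ω => mul_le_mul_of_nonneg_right (hXa ω) (hY0 ω)
  · refine mul_le_mul_of_nonneg_right ?_ (integral_nonneg hY0)
    simpa using integral_mono (hX2.integrable one_le_two) (integrable_const a) hXa

theorem le_mul_rpow_of_le_of_le_mul {m a b θ : ℝ} (ha0 : 0 ≤ a) (hb0 : 0 ≤ b) (ha : m ≤ a)
    (hab : m ≤ a * b) (hθ0 : 0 ≤ θ) (hθ1 : θ ≤ 1) : m ≤ a * b ^ θ := by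
  rcases le_total b 1 with hb | hb
  · exact hab.trans (mul_le_mul_of_nonneg_left (Real.self_le_rpow_of_le_one hb0 hb hθ1) ha0)
  · exact ha.trans (le_mul_of_one_le_right ha0 (Real.one_le_rpow hb hθ0))

theorem abs_covariance_le_mul_rpow {X Y : Ω → ℝ} (hX : Measurable X) (hY : MemLp Y 2 P)
    (hX0 : ∀ ω, 0 ≤ X ω) (hY0 : ∀ ω, 0 ≤ Y ω) {A M C u τ θ : ℝ} (hu : 0 ≤ u) (hτ : 0 ≤ τ)
    (hXA : ∀ ω, X ω ≤ A * u) (hYM : ∫ ω, Y ω ∂P ≤ M)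
    (hcov : |cov[X, Y; P]| ≤ C * u * (u * τ)) (hθ0 : 0 ≤ θ) (hθ1 : θ ≤ 1) :
    |cov[X, Y; P]| ≤ max (A * M) C * u * (u * τ) ^ θ := by
  obtain ⟨ω₀⟩ := nonempty_of_isProbabilityMeasure P
  have hAu : 0 ≤ A * u := (hX0 ω₀).trans (hXA ω₀)
  have htriv : |cov[X, Y; P]| ≤ max (A * M) C * u :=
    calc |cov[X, Y; P]| ≤ A * u * ∫ ω, Y ω ∂P :=
          abs_covariance_le_of_nonneg_of_le hX hY hX0 hXA hY0
      _ ≤ A * u * M := by gcongr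
      _ ≤ max (A * M) C * u := by
          rw [mul_right_comm]
          gcongr
          exact le_max_left _ _
  have hmix : |cov[X, Y; P]| ≤ max (A * M) C * u * (u * τ) :=
    hcov.trans (by gcongr; exact le_max_right _ _)
  exact le_mul_rpow_of_le_of_le_mul ((abs_nonneg _).trans htriv) (mul_nonneg hu hτ) htriv hmix
    hθ0 hθ1

theorem ae_tendsto_average_of_abs_covariance_le {Y : ℕ → Ω → ℝ} (hY : ∀ j, Measurable (Y j))
    (hY0 : ∀ j ω, 0 ≤ Y j ω) {A C s t l : ℝ} (hs0 : 0 ≤ s) (hs1 : s < 1)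
    (hYA : ∀ j ω, Y j ω ≤ A * ((j : ℝ) + 1) ^ s) (ht0 : 0 < t) (ht1 : t < 1)
    (hcov : ∀ i j, i ≤ j →
      |cov[Y i, Y j; P]| ≤ C * ((j : ℝ) + 1) ^ s * (((j : ℝ) + 1) ^ s * t ^ (j - i)))
    (hmean : Tendsto (fun j => ∫ ω, Y j ω ∂P) atTop (𝓝 l)) :
    ∀ᵐ ω ∂P, Tendsto (fun n : ℕ => (∑ j ∈ Finset.range n, Y j ω) / n) atTop (𝓝 l) := by
  have hY2 (j : ℕ) : MemLp (Y j) 2 P :=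
    .of_bound (hY j).aestronglyMeasurable _ (ae_of_all _ fun ω => by
      simpa only [Real.norm_of_nonneg (hY0 j ω)] using hYA j ω)
  obtain ⟨M, hM⟩ := hmean.bddAbove_range
  have hM (j : ℕ) : ∫ ω, Y j ω ∂P ≤ M := hM ⟨j, rfl⟩
  have hA : 0 ≤ A := by
    obtain ⟨ω⟩ := nonempty_of_isProbabilityMeasure P
    simpa using (hY0 0 ω).trans (hYA 0 ω)
  -- Any `θ ∈ (0, 1]` with `s * (1 + θ) < 1` would do.
  set θ : ℝ := (1 - s) / 2 with hθ
  have hcov' (i j : ℕ) (hij : i ≤ j) : |cov[Y i, Y j; P]| ≤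
      max (A * M) C * ((j : ℝ) + 1) ^ (s * (1 + θ)) * (t ^ θ) ^ (j - i) := by
    have hYiA (ω : Ω) : Y i ω ≤ A * ((j : ℝ) + 1) ^ s := by
      have hij' : (i : ℝ) ≤ j := by exact_mod_cast hij
      exact (hYA i ω).trans (by gcongr)
    refine (abs_covariance_le_mul_rpow (hY i) (hY2 j) (hY0 i) (hY0 j) (by positivity)
      (by positivity) hYiA (hM j) (hcov i j hij) (by linarith) (by linarith : θ ≤ 1)).trans_eq ?_
    rw [Real.mul_rpow (by positivity) (by positivity), ← Real.rpow_mul (by positivity),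
      Real.rpow_pow_comm ht0.le, mul_one_add, Real.rpow_add (by positivity)]
    ring
  exact ae_tendsto_average_of_variance_le hY2 hY0 (by nlinarith : 1 + s * (1 + θ) < 2)
    (variance_sum_range_le_of_abs_covariance_le hY2 (mul_nonneg hs0 (by linarith))
      (by positivity) (Real.rpow_lt_one ht0.le ht1 (by linarith)) hcov') hmean

/-- The process `W` has geometrically decaying covariances: the covariance of a test function of
`W m` with a test function of `W n` decays exponentially in the time lag `n - m`, uniformly over
the measurable test functions bounded by `1`. -/
def HasGeometricCovDecay {S : Type*} [MeasurableSpace S] (W : ℕ → Ω → S) (P : Measure Ω) : Prop :=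
  ∃ C t : ℝ, 0 < t ∧ t < 1 ∧ ∀ g h : S → ℝ, Measurable g → Measurable h →
    (∀ z, |g z| ≤ 1) → (∀ z, |h z| ≤ 1) → ∀ m n : ℕ, m ≤ n →
      |cov[fun ω => g (W m ω), fun ω => h (W n ω); P]| ≤ C * t ^ (n - m)

theorem HasGeometricCovDecay.comp {P : Measure Ω} {S T : Type*} [MeasurableSpace S]
    [MeasurableSpace T] {W : ℕ → Ω → S} (hW : HasGeometricCovDecay W P) {f : S → T}
    (hf : Measurable f) :
    HasGeometricCovDecay (fun n ω => f (W n ω)) P := by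
  obtain ⟨C, t, ht0, ht1, hcov⟩ := hW
  exact ⟨C, t, ht0, ht1, fun g h hg hh hg1 hh1 =>
    hcov (g ∘ f) (h ∘ f) (hg.comp hf) (hh.comp hf) (fun z => hg1 _) fun z => hh1 _⟩

theorem hasGeometricCovDecay_succ {S : Type*} [MeasurableSpace S] {W : ℕ → Ω → S}
    (hW : ∀ n, Measurable (W n)) {B b : ℝ} (hB : 0 ≤ B) (hb : 1 < b)
    (hcov : ∀ g h : S → ℝ, Measurable g → Measurable h → (∀ z, |g z| ≤ 1) → (∀ z, |h z| ≤ 1) →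
      ∀ m n : ℕ, 1 ≤ m → m ≤ n →
        |∫ ω, g (W m ω) * h (W n ω) ∂P - (∫ ω, g (W m ω) ∂P) * ∫ ω, h (W n ω) ∂P| ≤
          B * b ^ (-((n : ℝ) - m)) * (1 + b ^ (-(m : ℝ)))) :
    HasGeometricCovDecay (fun n => W (n + 1)) P := by
  have hb0 : 0 < b := one_pos.trans hb
  refine ⟨2 * B, b⁻¹, inv_pos.2 hb0, inv_lt_one_of_one_lt₀ hb,
    fun g h hg hh hg1 hh1 m n hmn => ?_⟩
  have memLp {f : S → ℝ} (hf : Measurable f) (hf1 : ∀ z, |f z| ≤ 1) (j : ℕ) :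
      MemLp (fun ω => f (W j ω)) 2 P :=
    .of_bound (hf.comp (hW j)).aestronglyMeasurable 1 (ae_of_all _ fun ω => hf1 _)
  have hlag : b ^ (-(((n + 1 : ℕ) : ℝ) - (m + 1 : ℕ))) = b⁻¹ ^ (n - m) := by
    rw [Nat.cast_succ, Nat.cast_succ, add_sub_add_right_eq_sub, ← Nat.cast_sub hmn,
      Real.rpow_neg hb0.le, Real.rpow_natCast, inv_pow]
  have hle_one : b ^ (-((m + 1 : ℕ) : ℝ)) ≤ 1 :=
    Real.rpow_le_one_of_one_le_of_nonpos hb.le (neg_nonpos.2 (Nat.cast_nonneg _))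
  rw [covariance_eq_sub (memLp hg hg1 _) (memLp hh hh1 _)]
  calc |_| ≤ B * b⁻¹ ^ (n - m) * (1 + b ^ (-((m + 1 : ℕ) : ℝ))) :=
        hlag ▸ hcov g h hg hh hg1 hh1 (m + 1) (n + 1) m.succ_pos (Nat.succ_le_succ hmn)
    _ ≤ B * b⁻¹ ^ (n - m) * (1 + 1) := by gcongr
    _ = 2 * B * b⁻¹ ^ (n - m) := by ring

theorem HasGeometricCovDecay.ae_tendsto_average {S : Type*} [MeasurableSpace S] {W : ℕ → Ω → S}
    (hW : HasGeometricCovDecay W P) (hWmeas : ∀ n, Measurable (W n)) {φ : ℕ → S → ℝ}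
    (hφ : ∀ j, Measurable (φ j)) (hφ0 : ∀ j z, 0 ≤ φ j z) {A s l : ℝ} (hA : 0 < A)
    (hs0 : 0 ≤ s) (hs1 : s < 1) (hφA : ∀ j z, φ j z ≤ A * ((j : ℝ) + 1) ^ s)
    (hmean : Tendsto (fun j => ∫ ω, φ j (W j ω) ∂P) atTop (𝓝 l)) :
    ∀ᵐ ω ∂P, Tendsto (fun n : ℕ => (∑ j ∈ Finset.range n, φ j (W j ω)) / n) atTop (𝓝 l) := by
  obtain ⟨C, t, ht0, ht1, hcov⟩ := hW
  have hC : 0 ≤ C := by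
    simpa using hcov 0 0 measurable_const measurable_const (by simp) (by simp) 0 0 le_rfl
  set B : ℕ → ℝ := fun j => A * ((j : ℝ) + 1) ^ s with hB
  have hB0 (j : ℕ) : 0 < B j := by positivity
  refine ae_tendsto_average_of_abs_covariance_le (fun j => (hφ j).comp (hWmeas j))
    (fun j ω => hφ0 j _) hs0 hs1 (fun j ω => hφA j _) ht0 ht1 (C := A ^ 2 * C)
    (fun i j hij => ?_) hmean
  have hnorm (j : ℕ) (z : S) : |(B j)⁻¹ * φ j z| ≤ 1 := by
    rw [abs_of_nonneg (mul_nonneg (inv_nonneg.2 (hB0 j).le) (hφ0 j z)), inv_mul_le_one₀ (hB0 j)]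
    exact hφA j z
  have hdecay := hcov (fun z => (B i)⁻¹ * φ i z) (fun z => (B j)⁻¹ * φ j z)
    ((hφ i).const_mul _) ((hφ j).const_mul _) (hnorm i) (hnorm j) i j hij
  rw [covariance_const_mul_left, covariance_const_mul_right, ← mul_assoc, abs_mul,
    abs_of_pos (mul_pos (inv_pos.2 (hB0 i)) (inv_pos.2 (hB0 j))), ← mul_inv,
    inv_mul_le_iff₀ (mul_pos (hB0 i) (hB0 j))] at hdecay
  have hBij : B i ≤ B j := by
    have hij' : (i : ℝ) ≤ j := by exact_mod_cast hij
    simp only [hB]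
    gcongr
  calc |cov[fun ω => φ i (W i ω), fun ω => φ j (W j ω); P]|
      ≤ B i * B j * (C * t ^ (j - i)) := hdecay
    _ ≤ B j * B j * (C * t ^ (j - i)) := by gcongr
    _ = A ^ 2 * C * ((j : ℝ) + 1) ^ s * (((j : ℝ) + 1) ^ s * t ^ (j - i)) := by
      simp only [hB]
      ring

end LawOfLargeNumbers

section KernelSmoothing

open Topology Module

/-- The measure `μ` has density `f` with respect to `ν` on the subsets of `U`; nothing is said
about `μ` outside `U`. -/
def HasDensityOn {V : Type*} [MeasurableSpace V] (μ ν : Measure V) (f : V → ℝ) (U : Set V) : Prop :=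
  ∀ B : Set V, B ⊆ U → MeasurableSet B → μ B = ∫⁻ z in B, ENNReal.ofReal (f z) ∂ν

theorem measurable_of_hasDensityOn_univ {S V : Type*} [MeasurableSpace S] [MeasurableSpace V]
    {Q : S → Measure V} {ν : Measure V} [SFinite ν] {q : S → V → ℝ}
    (hq : Measurable (Function.uncurry q)) (hQ : ∀ ξ, HasDensityOn (Q ξ) ν (q ξ) Set.univ) :
    Measurable Q := by
  refine Measure.measurable_of_measurable_coe Q fun B hB => ?_
  simp_rw [fun ξ => hQ ξ B B.subset_univ hB]
  exact hq.ennreal_ofReal.lintegral_prod_right'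

theorem HasDensityOn.mono {V : Type*} [MeasurableSpace V] {μ ν : Measure V} {f : V → ℝ}
    {U U' : Set V} (h : HasDensityOn μ ν f U) (hU : U' ⊆ U) : HasDensityOn μ ν f U' :=
  fun B hB => h B (hB.trans hU)

theorem HasDensityOn.restrict_le {V : Type*} [MeasurableSpace V] {μ ν : Measure V} {f : V → ℝ}
    {U : Set V} (h : HasDensityOn μ ν f U) (hU : MeasurableSet U) {b : ℝ}
    (hf : ∀ z ∈ U, f z ≤ b) : μ.restrict U ≤ ENNReal.ofReal b • ν.restrict U := by
  refine Measure.le_iff.2 fun B hB => ?_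
  rw [Measure.restrict_apply hB, h _ Set.inter_subset_right (hB.inter hU), Measure.smul_apply,
    Measure.restrict_apply hB, smul_eq_mul, ← setLIntegral_const]
  exact setLIntegral_mono measurable_const fun z hz => ENNReal.ofReal_le_ofReal (hf z hz.2)

theorem HasDensityOn.le_restrict {V : Type*} [MeasurableSpace V] {μ ν : Measure V} {f : V → ℝ}
    {U : Set V} (h : HasDensityOn μ ν f U) (hU : MeasurableSet U) {b : ℝ}
    (hf : ∀ z ∈ U, b ≤ f z) : ENNReal.ofReal b • ν.restrict U ≤ μ.restrict U := by
  refine Measure.le_iff.2 fun B hB => ?_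
  rw [Measure.restrict_apply hB, h _ Set.inter_subset_right (hB.inter hU), Measure.smul_apply,
    Measure.restrict_apply hB, smul_eq_mul, ← setLIntegral_const]
  exact setLIntegral_mono' (hB.inter hU) fun z hz => ENNReal.ofReal_le_ofReal (hf z hz.2)

theorem HasDensityOn.abs_integral_sub_le {V : Type*} [MeasurableSpace V] {μ ν : Measure V}
    [IsFiniteMeasure μ] {f k : V → ℝ} {U : Set V} (h : HasDensityOn μ ν f U) (hU : MeasurableSet U)
    {c L : ℝ} (hc : 0 ≤ c) (hL : 0 ≤ L) (hf : ∀ z ∈ U, |f z - c| ≤ L) (hk0 : ∀ z, 0 ≤ k z)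
    (hkU : Function.support k ⊆ U) (hk1 : ∫ z, k z ∂ν = 1) : |∫ z, k z ∂μ - c| ≤ L := by
  have restrict_eq (ρ : Measure V) : ∫ z in U, k z ∂ρ = ∫ z, k z ∂ρ :=
    setIntegral_eq_integral_of_forall_compl_eq_zero fun z hz =>
      Function.notMem_support.1 fun hz' => hz (hkU hz')
  have hkν : Integrable k (ν.restrict U) :=
    (Integrable.of_integral_ne_zero (hk1 ▸ one_ne_zero)).restrict
  have upper := h.restrict_le hU (b := c + L) fun z hz => by linarith [(abs_le.1 (hf z hz)).2]
  have lower := h.le_restrict hU (b := c - L) fun z hz => by linarith [(abs_le.1 (hf z hz)).1]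
  have hkμ : Integrable k (μ.restrict U) :=
    (hkν.smul_measure ENNReal.ofReal_ne_top).mono_measure upper
  have le_upper := integral_mono_measure upper (ae_of_all _ hk0)
    (hkν.smul_measure ENNReal.ofReal_ne_top)
  have lower_le := integral_mono_measure lower (ae_of_all _ hk0) hkμ
  rw [integral_smul_measure, restrict_eq, restrict_eq, hk1, smul_eq_mul, mul_one]
    at le_upper lower_le
  rw [ENNReal.toReal_ofReal (add_nonneg hc hL)] at le_upper
  exact abs_sub_le_iff.2 ⟨by linarith, by linarith [(le_max_left _ _).trans lower_le]⟩

theorem eventually_ball_mul_subset {V : Type*} [PseudoMetricSpace V] {x : V} {U : Set V}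
    (hU : U ∈ 𝓝 x) (δ : ℝ) : ∀ᶠ a in 𝓝 (0 : ℝ), Metric.ball x (a * δ) ⊆ U := by
  obtain ⟨ε, hε, hεU⟩ := Metric.mem_nhds_iff.1 hU
  have hlim : Tendsto (fun a : ℝ => a * δ) (𝓝 0) (𝓝 0) := by
    simpa using (tendsto_id (α := ℝ) (x := 𝓝 0)).mul_const δ
  exact (hlim.eventually_lt_const hε).mono fun a ha => (Metric.ball_subset_ball ha.le).trans hεU

variable {V : Type*} [NormedAddCommGroup V] [NormedSpace ℝ V]

/-- The kernel `K` rescaled to bandwidth `a` and centred at `x`, normalised to preserve the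
integral of `K`: the paper's `z ↦ a^{-d} K((z - x) / a)`. -/
noncomputable def scaledKernel (K : V → ℝ) (a : ℝ) (x z : V) : ℝ :=
  (a ^ finrank ℝ V)⁻¹ * K (a⁻¹ • (z - x))

theorem scaledKernel_mul_scaledKernel (K : V → ℝ) (a : ℝ) (x y z z' : V) :
    scaledKernel K a x z * scaledKernel K a y z' =
      (a ^ (2 * finrank ℝ V))⁻¹ * (K (a⁻¹ • (z - x)) * K (a⁻¹ • (z' - y))) := by
  rw [scaledKernel, scaledKernel, two_mul, pow_add, mul_inv, mul_mul_mul_comm]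

variable [MeasurableSpace V]

/-- A smoothing kernel for density estimation: a bounded probability density with respect to `ν`
which is supported in the ball of radius `δ`. -/
structure IsSmoothingKernel (K : V → ℝ) (δ : ℝ) (ν : Measure V) : Prop where
  measurable : Measurable K
  nonneg : ∀ z, 0 ≤ K z
  exists_le : ∃ C, ∀ z, K z ≤ C
  support_subset : Function.support K ⊆ Metric.ball 0 δ
  integral_eq_one : ∫ z, K z ∂ν = 1

namespace IsSmoothingKernel

variable {K : V → ℝ} {δ : ℝ} {ν : Measure V}

theorem scaledKernel_nonneg (hK : IsSmoothingKernel K δ ν) {a : ℝ} (ha : 0 < a) (x z : V) :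
    0 ≤ scaledKernel K a x z :=
  mul_nonneg (by positivity) (hK.nonneg _)

theorem support_scaledKernel_subset (hK : IsSmoothingKernel K δ ν) {a : ℝ} (ha : 0 < a) (x : V) :
    Function.support (scaledKernel K a x) ⊆ Metric.ball x (a * δ) := by
  intro z hz
  have hz' := hK.support_subset (right_ne_zero_of_mul hz)
  rwa [mem_ball_zero_iff, norm_smul, Real.norm_of_nonneg (inv_nonneg.2 ha.le),
    inv_mul_lt_iff₀ ha, ← dist_eq_norm] at hz'

theorem exists_scaledKernel_le (hK : IsSmoothingKernel K δ ν) :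
    ∃ C, 0 < C ∧ ∀ a, 0 < a → ∀ x z, scaledKernel K a x z ≤ (a ^ finrank ℝ V)⁻¹ * C := by
  obtain ⟨C, hC⟩ := hK.exists_le
  exact ⟨max C 1, lt_max_of_lt_right one_pos, fun a ha x z =>
    mul_le_mul_of_nonneg_left ((hC _).trans (le_max_left _ _)) (by positivity)⟩

theorem exists_abs_scaledKernel_le (hK : IsSmoothingKernel K δ ν) (a : ℝ) (x : V) :
    ∃ C, ∀ z, |scaledKernel K a x z| ≤ C := by
  obtain ⟨C, hC⟩ := hK.exists_le
  refine ⟨|(a ^ finrank ℝ V)⁻¹| * C, fun z => ?_⟩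
  rw [scaledKernel, abs_mul, abs_of_nonneg (hK.nonneg _)]
  exact mul_le_mul_of_nonneg_left (hC _) (abs_nonneg _)

variable [BorelSpace V]

theorem measurable_scaledKernel (hK : IsSmoothingKernel K δ ν) (a : ℝ) (x : V) :
    Measurable (scaledKernel K a x) :=
  (hK.measurable.comp ((measurable_id.sub_const x).const_smul a⁻¹)).const_mul _

theorem integrable_scaledKernel_comp (hK : IsSmoothingKernel K δ ν) {Ω : Type*}
    [MeasurableSpace Ω] {P : Measure Ω} [IsFiniteMeasure P] {X : Ω → V} (hX : AEMeasurable X P)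
    (b : ℝ) (x : V) : Integrable (fun ω => scaledKernel K b x (X ω)) P := by
  obtain ⟨D, hD⟩ := hK.exists_abs_scaledKernel_le b x
  exact .of_bound ((hK.measurable_scaledKernel b x).comp_aemeasurable hX).aestronglyMeasurable D
    (ae_of_all _ fun ω => hD _)

variable [FiniteDimensional ℝ V] [ν.IsAddHaarMeasure]

theorem integral_scaledKernel (hK : IsSmoothingKernel K δ ν) {a : ℝ}
    (ha : 0 < a) (x : V) : ∫ z, scaledKernel K a x z ∂ν = 1 := by
  simp only [scaledKernel]
  rw [integral_const_mul, integral_sub_right_eq_self (fun z => K (a⁻¹ • z)) x,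
    Measure.integral_comp_inv_smul_of_nonneg ν K ha.le, hK.integral_eq_one, smul_eq_mul, mul_one,
    inv_mul_cancel₀ (by positivity)]

theorem abs_integral_scaledKernel_sub_le (hK : IsSmoothingKernel K δ ν)
    {μ : Measure V} [IsFiniteMeasure μ] {f : V → ℝ} {x : V} {a c L : ℝ} (ha : 0 < a)
    (hμ : HasDensityOn μ ν f (Metric.ball x (a * δ))) (hc : 0 ≤ c) (hL : 0 ≤ L)
    (hf : ∀ z ∈ Metric.ball x (a * δ), |f z - c| ≤ L) : |∫ z, scaledKernel K a x z ∂μ - c| ≤ L :=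
  hμ.abs_integral_sub_le Metric.isOpen_ball.measurableSet hc hL hf (hK.scaledKernel_nonneg ha x)
    (hK.support_scaledKernel_subset ha x) (hK.integral_scaledKernel ha x)

theorem tendstoUniformly_integral_scaledKernel (hK : IsSmoothingKernel K δ ν)
    {ι : Type*} {μ : ι → Measure V} [∀ i, IsFiniteMeasure (μ i)] {f : ι → V → ℝ} {x : V}
    {U : Set V} (hU : U ∈ 𝓝 x) (hμ : ∀ i, HasDensityOn (μ i) ν (f i) U) (hf0 : ∀ i, 0 ≤ f i x)
    (hf : EquicontinuousAt f x) :
    TendstoUniformly (fun a i => ∫ z, scaledKernel K a x z ∂μ i) (fun i => f i x) (𝓝[>] 0) := by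
  refine Metric.tendstoUniformly_iff.2 fun ε hε => ?_
  have hnear := inter_mem hU (Metric.equicontinuousAt_iff_right.1 hf (ε / 2) (half_pos hε))
  filter_upwards [self_mem_nhdsWithin,
    mem_nhdsWithin_of_mem_nhds (eventually_ball_mul_subset hnear δ)] with a ha hball i
  rw [dist_comm, Real.dist_eq]
  refine (hK.abs_integral_scaledKernel_sub_le ha
    ((hμ i).mono (hball.trans Set.inter_subset_left)) (hf0 i) (half_pos hε).le
    fun z hz => ?_).trans_lt (half_lt_self hε)
  rw [← Real.dist_eq, dist_comm]
  exact ((hball hz).2 i).le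

theorem eventually_abs_integral_scaledKernel_sub_le
    (hK : IsSmoothingKernel K δ ν) {Q : V → Measure V} [∀ ξ, IsFiniteMeasure (Q ξ)]
    {q : V → V → ℝ} {x y : V} {W : Set V} (hW : W ∈ 𝓝 y)
    (hQ : ∀ᶠ ξ in 𝓝 x, HasDensityOn (Q ξ) ν (q ξ) W) (hq0 : 0 ≤ q x y)
    (hq : ContinuousAt (Function.uncurry q) (x, y)) {ε : ℝ} (hε : 0 < ε) :
    ∀ᶠ a in 𝓝[>] (0 : ℝ), ∀ ξ ∈ Metric.ball x (a * δ),
      |∫ z, scaledKernel K a y z ∂Q ξ - q x y| ≤ ε := by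
  obtain ⟨U', hU', W', hW', hnear⟩ := mem_nhds_prod_iff.1 (Metric.continuousAt_iff'.1 hq ε hε)
  filter_upwards [self_mem_nhdsWithin,
    mem_nhdsWithin_of_mem_nhds (eventually_ball_mul_subset (inter_mem hQ hU') δ),
    mem_nhdsWithin_of_mem_nhds (eventually_ball_mul_subset (inter_mem hW hW') δ)]
    with a ha hballx hbally ξ hξ
  refine hK.abs_integral_scaledKernel_sub_le ha
    ((hballx hξ).1.mono (hbally.trans Set.inter_subset_left)) hq0 hε.le fun z hz => ?_
  exact (hnear (Set.mk_mem_prod (hballx hξ).2 (hbally hz).2)).le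

end IsSmoothingKernel

end KernelSmoothing

section MarkovChain

open Topology

theorem iterK_coe_eq_pow {S : Type*} [MeasurableSpace S] (R : Kernel S S) (n : ℕ) :
    iterK R n = ⇑(R ^ n) := by
  induction n with
  | zero => exact funext fun y => (Kernel.id_apply y).symm
  | succ n ih =>
    funext y
    rw [iterK, ih, pow_succ']
    exact (Kernel.comp_apply R (R ^ n) y).symm

theorem abs_integral_sub_integral_le_of_measureReal {S : Type*} [MeasurableSpace S]
    {μ π : Measure S} [IsFiniteMeasure μ] [IsFiniteMeasure π] {g : S → ℝ} {C η : ℝ}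
    (hg : Measurable g) (hg0 : ∀ z, 0 ≤ g z) (hgC : ∀ z, g z ≤ C) (hC : 0 ≤ C)
    (hμπ : ∀ B, MeasurableSet B → |μ.real B - π.real B| ≤ η) :
    |∫ z, g z ∂μ - ∫ z, g z ∂π| ≤ C * η := by
  have layer_cake (ρ : Measure S) [IsFiniteMeasure ρ] :
      ∫ z, g z ∂ρ = ∫ u in Set.Ioc 0 C, ρ.real {z | u ≤ g z} :=
    Integrable.integral_eq_integral_Ioc_meas_le
      (.of_bound hg.aestronglyMeasurable C (ae_of_all _ fun z => by
        simpa only [Real.norm_of_nonneg (hg0 z)] using hgC z))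
      (ae_of_all _ hg0) (ae_of_all _ hgC)
  have integrable_tail (ρ : Measure S) [IsFiniteMeasure ρ] :
      IntegrableOn (fun u => ρ.real {z | u ≤ g z}) (Set.Ioc 0 C) := by
    have htail : Antitone fun u => ρ.real {z | u ≤ g z} :=
      fun u v huv => measureReal_mono fun z hz => huv.trans hz
    exact ((htail.antitoneOn _).integrableOn_isCompact isCompact_Icc).mono_set
      Set.Ioc_subset_Icc_self
  rw [layer_cake μ, layer_cake π, ← integral_sub (integrable_tail μ) (integrable_tail π)]
  have hbound := norm_setIntegral_le_of_norm_le_const (μ := volume) (s := Set.Ioc 0 C)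
    (f := fun u => μ.real {z | u ≤ g z} - π.real {z | u ≤ g z}) (by simp)
    fun u _ => hμπ _ (measurableSet_le measurable_const hg)
  simpa [mul_comm, hC] using hbound

variable {Ω S T : Type*} {m mΩ : MeasurableSpace Ω} [MeasurableSpace S] [MeasurableSpace T]
  {P : Measure Ω} [IsProbabilityMeasure P]

theorem hasCondDistrib_of_condExp_eq (hm : m ≤ mΩ)
    {X : Ω → S} {Y : Ω → T} {κ : Kernel S T} [IsMarkovKernel κ] (hX : Measurable[m] X)
    (hY : Measurable Y)
    (hκ : ∀ g : T → ℝ, Measurable g → (∃ C, ∀ u, |g u| ≤ C) →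
      P[fun ω => g (Y ω)|m] =ᵐ[P] fun ω => ∫ u, g u ∂κ (X ω)) :
    HasCondDistrib Y X κ P := by
  have hX' : Measurable X := hX.mono hm le_rfl
  refine ⟨(hX'.prodMk hY).aemeasurable, Measure.ext_prod fun {A B} hA hB => ?_⟩
  have hκB : Measurable fun ω => κ (X ω) B := (κ.measurable_coe hB).comp hX'
  have hreal : P.real (X ⁻¹' A ∩ Y ⁻¹' B) = ∫ ω in X ⁻¹' A, (κ (X ω)).real B ∂P := by
    have hind : Measurable (B.indicator (1 : T → ℝ)) := measurable_one.indicator hB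
    have hbdd (u : T) : |B.indicator (1 : T → ℝ) u| ≤ 1 := by
      by_cases hu : u ∈ B <;> simp [hu]
    calc P.real (X ⁻¹' A ∩ Y ⁻¹' B)
        = ∫ ω in X ⁻¹' A, B.indicator (1 : T → ℝ) (Y ω) ∂P := by
          rw [Set.inter_comm, ← measureReal_restrict_apply (hY hB),
            ← integral_indicator_one (hY hB)]
          rfl
      _ = ∫ ω in X ⁻¹' A, P[fun ω => B.indicator (1 : T → ℝ) (Y ω)|m] ω ∂P :=
          (setIntegral_condExp hm (.of_bound (hind.comp hY).aestronglyMeasurable 1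
            (ae_of_all _ fun ω => hbdd (Y ω))) (hX hA)).symm
      _ = ∫ ω in X ⁻¹' A, (κ (X ω)).real B ∂P := by
          refine integral_congr_ae (ae_restrict_of_ae ?_)
          filter_upwards [hκ _ hind ⟨1, hbdd⟩] with ω hω
          rw [hω, integral_indicator_one hB]
  calc P.map (fun ω => (X ω, Y ω)) (A ×ˢ B) = P (X ⁻¹' A ∩ Y ⁻¹' B) := by
        rw [Measure.map_apply (hX'.prodMk hY) (hA.prod hB)]; rfl
    _ = ∫⁻ ω in X ⁻¹' A, κ (X ω) B ∂P := by
        refine (ENNReal.toReal_eq_toReal_iff' (measure_ne_top _ _) ?_).1 ?_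
        · exact ((setLIntegral_mono measurable_const fun ω _ => prob_le_one).trans_lt
            (by simp)).ne
        · rw [← integral_toReal hκB.aemeasurable (ae_of_all _ fun ω => measure_lt_top _ _)]
          exact hreal
    _ = (P.map X ⊗ₘ κ) (A ×ˢ B) := by
        rw [Measure.compProd_apply_prod hA hB, setLIntegral_map hA (κ.measurable_coe hB) hX']

theorem measurable_iSup_comap_succ (X : ℕ → Ω → S) {n : ℕ} (hn : 1 ≤ n) :
    Measurable[⨆ i : Fin n, MeasurableSpace.comap (X (i.1 + 1)) inferInstance] (X n) := by
  obtain ⟨n, rfl⟩ := Nat.exists_eq_add_of_le' hn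
  exact (comap_measurable (X (n + 1))).mono
    (le_iSup (fun i : Fin (n + 1) => MeasurableSpace.comap (X (i.1 + 1)) _) (Fin.last n)) le_rfl

theorem iSup_comap_succ_le {X : ℕ → Ω → S} (hX : ∀ n, Measurable (X n)) (n : ℕ) :
    ⨆ i : Fin n, MeasurableSpace.comap (X (i.1 + 1)) inferInstance ≤ mΩ :=
  iSup_le fun i => (hX (i.1 + 1)).comap_le

theorem integral_mul_comp_of_hasCondDistrib {X : Ω → S} {Y : Ω → T} {κ : Kernel S T}
    [IsMarkovKernel κ] (h : HasCondDistrib Y X κ P) {f : S → ℝ} {g : T → ℝ}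
    (hf : Measurable f) (hg : Measurable g) {C D : ℝ} (hfC : ∀ ξ, |f ξ| ≤ C)
    (hgD : ∀ z, |g z| ≤ D) :
    ∫ ω, f (X ω) * g (Y ω) ∂P = ∫ ω, f (X ω) * ∫ z, g z ∂κ (X ω) ∂P := by
  have := Measure.isProbabilityMeasure_map h.aemeasurable_fst
  have hfg : Measurable fun u : S × T => f u.1 * g u.2 :=
    (hf.comp measurable_fst).mul (hg.comp measurable_snd)
  have hint : Integrable (fun u : S × T => f u.1 * g u.2) (P.map X ⊗ₘ κ) :=
    .of_bound hfg.aestronglyMeasurable (C * D) (ae_of_all _ fun u => by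
      rw [norm_mul]
      exact mul_le_mul (hfC _) (hgD _) (norm_nonneg _) ((abs_nonneg _).trans (hfC u.1)))
  calc ∫ ω, f (X ω) * g (Y ω) ∂P = ∫ u, f u.1 * g u.2 ∂(P.map X ⊗ₘ κ) :=
        h.integral_comp hfg.aestronglyMeasurable
    _ = ∫ ξ, f ξ * ∫ z, g z ∂κ ξ ∂(P.map X) := by
        simp_rw [Measure.integral_compProd hint, integral_const_mul]
    _ = ∫ ω, f (X ω) * ∫ z, g z ∂κ (X ω) ∂P :=
        integral_map h.aemeasurable_fst
          (hf.stronglyMeasurable.mul hg.stronglyMeasurable.integral_kernel).aestronglyMeasurable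

theorem integrable_integral_kernel_comp {X : Ω → S} (hX : AEMeasurable X P) {κ : Kernel S T}
    [IsMarkovKernel κ] {g : T → ℝ} (hg : Measurable g) {D : ℝ} (hgD : ∀ z, |g z| ≤ D) :
    Integrable (fun ω => ∫ z, g z ∂κ (X ω)) P := by
  refine .of_bound (hg.stronglyMeasurable.integral_kernel.measurable.comp_aemeasurable
    hX).aestronglyMeasurable D (ae_of_all _ fun ω => ?_)
  have hle : ∀ᵐ z ∂κ (X ω), ‖g z‖ ≤ D := ae_of_all _ hgD
  simpa using norm_integral_le_of_norm_le_const hle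

theorem map_eq_pow_comp_map_zero {X : ℕ → Ω → S} {R : Kernel S S} [IsMarkovKernel R]
    (hX : ∀ n, HasCondDistrib (X (n + 1)) (X n) R P) (n : ℕ) :
    P.map (X n) = (R ^ n) ∘ₘ P.map (X 0) := by
  induction n with
  | zero => exact (Measure.id_comp (μ := P.map (X 0))).symm
  | succ n ih =>
    calc P.map (X (n + 1)) = (P.map fun ω => (X n ω, X (n + 1) ω)).snd :=
          (Measure.snd_map_prodMk₀ (hX n).aemeasurable_fst).symm
      _ = R ∘ₘ P.map (X n) := by rw [(hX n).map_eq, Measure.snd_compProd]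
      _ = (R ^ (n + 1)) ∘ₘ P.map (X 0) := by
          rw [ih, Measure.comp_assoc, pow_succ']
          rfl

theorem abs_measureReal_map_sub_le {X : ℕ → Ω → S} {R : Kernel S S} [IsMarkovKernel R]
    (hX : ∀ n, HasCondDistrib (X (n + 1)) (X n) R P) {π : Measure S} {A : Set S}
    (hA : ∀ ω, X 0 ω ∈ A) {η : ℝ} {n : ℕ} {B : Set S} (hB : MeasurableSet B)
    (hR : ∀ ξ ∈ A, |((R ^ n) ξ).real B - π.real B| ≤ η) :
    |(P.map (X n)).real B - π.real B| ≤ η := by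
  have := Measure.isProbabilityMeasure_map (hX n).aemeasurable_fst
  have hRB : AEMeasurable (fun ω => (R ^ n) (X 0 ω) B) P :=
    ((R ^ n).measurable_coe hB).comp_aemeasurable (hX 0).aemeasurable_fst
  have hmap : P.map (X n) B = ∫⁻ ω, (R ^ n) (X 0 ω) B ∂P := by
    rw [map_eq_pow_comp_map_zero hX, Measure.bind_apply hB (R ^ n).aemeasurable,
      lintegral_map' ((R ^ n).measurable_coe hB).aemeasurable (hX 0).aemeasurable_fst]
  have hfin : ∫⁻ ω, (R ^ n) (X 0 ω) B ∂P ≠ ⊤ := hmap ▸ measure_ne_top _ _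
  have hreal : (P.map (X n)).real B = ∫ ω, ((R ^ n) (X 0 ω)).real B ∂P :=
    (congrArg ENNReal.toReal hmap).trans (integral_toReal hRB (ae_lt_top' hRB hfin)).symm
  calc |(P.map (X n)).real B - π.real B|
      = |∫ ω, (((R ^ n) (X 0 ω)).real B - π.real B) ∂P| := by
        have hint : Integrable (fun ω => ((R ^ n) (X 0 ω)).real B) P :=
          integrable_toReal_of_lintegral_ne_top hRB hfin
        rw [hreal, integral_sub hint (integrable_const _), integral_const, probReal_univ, one_smul]
    _ ≤ η := by
        have hle : ∀ᵐ ω ∂P, ‖((R ^ n) (X 0 ω)).real B - π.real B‖ ≤ η :=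
          ae_of_all _ fun ω => hR _ (hA ω)
        simpa using norm_integral_le_of_norm_le_const hle

theorem tendsto_integral_comp_of_tendsto_pow {X : ℕ → Ω → S} {R : Kernel S S} [IsMarkovKernel R]
    (hX : ∀ n, HasCondDistrib (X (n + 1)) (X n) R P) {π : Measure S} [IsFiniteMeasure π]
    {A : Set S} (hA : ∀ ω, X 0 ω ∈ A) {η : ℕ → ℝ} (hη : Tendsto η atTop (𝓝 0))
    (hR : ∀ᶠ n in atTop, ∀ ξ ∈ A, ∀ B, MeasurableSet B → |((R ^ n) ξ).real B - π.real B| ≤ η n)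
    {g : S → ℝ} (hg : Measurable g) (hg0 : ∀ z, 0 ≤ g z) {C : ℝ} (hgC : ∀ z, g z ≤ C) :
    Tendsto (fun n => ∫ ω, g (X n ω) ∂P) atTop (𝓝 (∫ z, g z ∂π)) := by
  obtain ⟨ω₀⟩ := nonempty_of_isProbabilityMeasure P
  have hC : 0 ≤ C := (hg0 (X 0 ω₀)).trans (hgC _)
  rw [tendsto_iff_dist_tendsto_zero]
  refine squeeze_zero' (Eventually.of_forall fun n => dist_nonneg) ?_
    (by simpa only [mul_zero] using hη.const_mul C)
  filter_upwards [hR] with n hn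
  have := Measure.isProbabilityMeasure_map (hX n).aemeasurable_fst
  rw [Real.dist_eq, ← integral_map (hX n).aemeasurable_fst hg.aestronglyMeasurable]
  exact abs_integral_sub_integral_le_of_measureReal hg hg0 hgC hC fun B hB =>
    abs_measureReal_map_sub_le hX hA hB fun ξ hξ => hn ξ hξ B hB

end MarkovChain

section KernelEstimator

open Topology Module

variable {Ω : Type*} [MeasurableSpace Ω] {P : Measure Ω} [IsProbabilityMeasure P]

theorem tendsto_integral_comp_of_tendstoUniformlyOn {S : Type*} {X : ℕ → Ω → S} {A : Set S}
    (hA : ∀ n ω, X n ω ∈ A) {F : ℕ → S → ℝ} {f : S → ℝ} (hF : TendstoUniformlyOn F f atTop A)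
    (hFint : ∀ n, Integrable (fun ω => F n (X n ω)) P)
    (hfint : ∀ n, Integrable (fun ω => f (X n ω)) P) {c : ℝ}
    (hf : Tendsto (fun n => ∫ ω, f (X n ω) ∂P) atTop (𝓝 c)) :
    Tendsto (fun n => ∫ ω, F n (X n ω) ∂P) atTop (𝓝 c) := by
  refine hf.congr_dist (Metric.tendsto_nhds.2 fun ε hε => ?_)
  filter_upwards [Metric.tendstoUniformlyOn_iff.1 hF (ε / 2) (half_pos hε)] with n hn
  have hle : ∀ᵐ ω ∂P, ‖f (X n ω) - F n (X n ω)‖ ≤ ε / 2 :=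
    ae_of_all _ fun ω => (Real.dist_eq _ _ ▸ hn _ (hA n ω)).le
  rw [dist_zero_right, Real.norm_of_nonneg dist_nonneg, dist_eq_norm,
    ← integral_sub (hfint n) (hFint n)]
  refine (norm_integral_le_of_norm_le_const hle).trans_lt ?_
  simpa using hε

variable {V : Type*} [NormedAddCommGroup V] [NormedSpace ℝ V]
  [MeasurableSpace V] [BorelSpace V] {ν : Measure V} {K : V → ℝ} {δ : ℝ}
  {a : ℕ → ℝ}

theorem IsSmoothingKernel.ae_tendsto_average_scaledKernel (hK : IsSmoothingKernel K δ ν)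
    (ha0 : ∀ n, 0 < a n) {A s c : ℝ} (hs0 : 0 ≤ s) (hs1 : s < 1)
    (haA : ∀ n, (a n ^ finrank ℝ V)⁻¹ ≤ A * ((n : ℝ) + 1) ^ s) {X : ℕ → Ω → V}
    (hX : ∀ n, Measurable (X n)) (hcov : HasGeometricCovDecay X P) {x : V}
    (hmean : Tendsto (fun n => ∫ ω, scaledKernel K (a n) x (X n ω) ∂P) atTop (𝓝 c)) :
    ∀ᵐ ω ∂P, Tendsto (fun n : ℕ => (∑ j ∈ Finset.range n, scaledKernel K (a j) x (X j ω)) / n)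
      atTop (𝓝 c) := by
  obtain ⟨C, hC0, hC⟩ := hK.exists_scaledKernel_le
  have hA : 0 < A := by simpa using (inv_pos.2 (pow_pos (ha0 0) _)).trans_le (haA 0)
  refine hcov.ae_tendsto_average hX (fun j => hK.measurable_scaledKernel (a j) x)
    (fun j => hK.scaledKernel_nonneg (ha0 j) x) (mul_pos hA hC0) hs0 hs1 (fun j z => ?_) hmean
  calc scaledKernel K (a j) x z ≤ (a j ^ finrank ℝ V)⁻¹ * C := hC _ (ha0 j) x z
    _ ≤ A * ((j : ℝ) + 1) ^ s * C := mul_le_mul_of_nonneg_right (haA j) hC0.le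
    _ = A * C * ((j : ℝ) + 1) ^ s := by ring

theorem IsSmoothingKernel.ae_tendsto_average_scaledKernel_mul (hK : IsSmoothingKernel K δ ν)
    (ha0 : ∀ n, 0 < a n) {A s c : ℝ} (hs0 : 0 ≤ s) (hs1 : 2 * s < 1)
    (haA : ∀ n, (a n ^ finrank ℝ V)⁻¹ ≤ A * ((n : ℝ) + 1) ^ s) {X Y : ℕ → Ω → V}
    (hX : ∀ n, Measurable (X n)) (hY : ∀ n, Measurable (Y n))
    (hcov : HasGeometricCovDecay (fun n ω => (X n ω, Y n ω)) P) {x y : V}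
    (hmean : Tendsto (fun n => ∫ ω, scaledKernel K (a n) x (X n ω) *
      scaledKernel K (a n) y (Y n ω) ∂P) atTop (𝓝 c)) :
    ∀ᵐ ω ∂P, Tendsto (fun n : ℕ => (∑ j ∈ Finset.range n, scaledKernel K (a j) x (X j ω) *
      scaledKernel K (a j) y (Y j ω)) / n) atTop (𝓝 c) := by
  obtain ⟨C, hC0, hC⟩ := hK.exists_scaledKernel_le
  have hA : 0 < A := by simpa using (inv_pos.2 (pow_pos (ha0 0) _)).trans_le (haA 0)
  have hbound (j : ℕ) (u z : V) : scaledKernel K (a j) u z ≤ A * ((j : ℝ) + 1) ^ s * C :=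
    (hC _ (ha0 j) u z).trans (mul_le_mul_of_nonneg_right (haA j) hC0.le)
  refine hcov.ae_tendsto_average (fun n => (hX n).prodMk (hY n))
    (φ := fun j z => scaledKernel K (a j) x z.1 * scaledKernel K (a j) y z.2)
    (fun j => ((hK.measurable_scaledKernel (a j) x).comp measurable_fst).mul
      ((hK.measurable_scaledKernel (a j) y).comp measurable_snd))
    (fun j z => mul_nonneg (hK.scaledKernel_nonneg (ha0 j) x _)
      (hK.scaledKernel_nonneg (ha0 j) y _))
    (pow_pos (mul_pos hA hC0) 2) (mul_nonneg two_pos.le hs0) hs1 (fun j z => ?_) hmean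
  calc scaledKernel K (a j) x z.1 * scaledKernel K (a j) y z.2
      ≤ (A * ((j : ℝ) + 1) ^ s * C) * (A * ((j : ℝ) + 1) ^ s * C) :=
        mul_le_mul (hbound j x _) (hbound j y _) (hK.scaledKernel_nonneg (ha0 j) y _)
          (by positivity)
    _ = (A * C) ^ 2 * ((j : ℝ) + 1) ^ (2 * s) := by
        rw [two_mul s, Real.rpow_add (by positivity)]
        ring

theorem IsSmoothingKernel.isLittleO_integral_scaledKernel_mul_sub (hK : IsSmoothingKernel K δ ν)
    (ha : Tendsto a atTop (𝓝[>] 0)) {X : ℕ → Ω → V} (hX : ∀ n, AEMeasurable (X n) P) {x : V}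
    {G : ℕ → V → ℝ}
    (hint : ∀ n, Integrable (fun ω => scaledKernel K (a n) x (X n ω) * G n (X n ω)) P) {c : ℝ}
    (hG : ∀ ε > 0, ∀ᶠ n in atTop, ∀ ξ ∈ Metric.ball x (a n * δ), |G n ξ - c| ≤ ε) :
    (fun n => ∫ ω, scaledKernel K (a n) x (X n ω) * G n (X n ω) ∂P -
      (∫ ω, scaledKernel K (a n) x (X n ω) ∂P) * c)
      =o[atTop] fun n => ∫ ω, scaledKernel K (a n) x (X n ω) ∂P := by
  refine Asymptotics.isLittleO_iff.2 fun ε hε => ?_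
  filter_upwards [hG ε hε, ha.eventually self_mem_nhdsWithin] with n hn han
  have hk0 := hK.scaledKernel_nonneg han x
  have hpoint (ξ : V) : ‖scaledKernel K (a n) x ξ * G n ξ - scaledKernel K (a n) x ξ * c‖ ≤
      ε * scaledKernel K (a n) x ξ := by
    rw [← mul_sub, norm_mul, Real.norm_of_nonneg (hk0 ξ), mul_comm ε]
    by_cases hξ : scaledKernel K (a n) x ξ = 0
    · simp only [hξ, zero_mul, le_refl]
    · exact mul_le_mul_of_nonneg_left (hn ξ (hK.support_scaledKernel_subset han x hξ)) (hk0 ξ)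
  have hkint := hK.integrable_scaledKernel_comp (hX n) (a n) x
  rw [← integral_mul_const, ← integral_sub (hint n) (hkint.mul_const _),
    Real.norm_of_nonneg (integral_nonneg fun ω => hk0 _), ← integral_const_mul]
  exact norm_integral_le_of_norm_le (hkint.const_mul ε) (ae_of_all _ fun ω => hpoint _)

variable [FiniteDimensional ℝ V] [ν.IsAddHaarMeasure]

theorem IsSmoothingKernel.tendsto_integral_scaledKernel_comp (hK : IsSmoothingKernel K δ ν)
    (ha : Tendsto a atTop (𝓝[>] 0)) {X : ℕ → Ω → V} {R : Kernel V V} [IsMarkovKernel R]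
    (hX : ∀ n, HasCondDistrib (X (n + 1)) (X n) R P) {A U : Set V} (hA : ∀ n ω, X n ω ∈ A)
    {r : V → V → ℝ} {x : V} (hU : U ∈ 𝓝 x) (hR : ∀ ξ ∈ A, HasDensityOn (R ξ) ν (r ξ) U)
    (hr : EquicontinuousAt (fun ξ : A => r ξ) x) (hrmeas : Measurable fun ξ => r ξ x)
    (hr0 : ∀ ξ, 0 ≤ r ξ x) {C : ℝ} (hrC : ∀ ξ, r ξ x ≤ C) {c : ℝ}
    (hmean : Tendsto (fun n => ∫ ω, r (X n ω) x ∂P) atTop (𝓝 c)) :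
    Tendsto (fun n => ∫ ω, scaledKernel K (a n) x (X n ω) ∂P) atTop (𝓝 c) := by
  have huniform : TendstoUniformlyOn (fun b ξ => ∫ z, scaledKernel K b x z ∂(R ξ)) (fun ξ => r ξ x)
      (𝓝[>] 0) A :=
    tendstoUniformlyOn_iff_tendstoUniformly_comp_coe.2
      (hK.tendstoUniformly_integral_scaledKernel hU (fun ξ : A => hR ξ ξ.2) (fun ξ => hr0 ξ) hr)
  have hstep (n : ℕ) : ∫ ω, scaledKernel K (a (n + 1)) x (X (n + 1) ω) ∂P =
      ∫ ω, ∫ z, scaledKernel K (a (n + 1)) x z ∂(R (X n ω)) ∂P := by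
    obtain ⟨D, hD⟩ := hK.exists_abs_scaledKernel_le (a (n + 1)) x
    simpa only [one_mul] using integral_mul_comp_of_hasCondDistrib (hX n) measurable_const
      (hK.measurable_scaledKernel _ x) (fun _ => abs_one.le) hD
  rw [← tendsto_add_atTop_iff_nat 1]
  simp_rw [hstep]
  refine tendsto_integral_comp_of_tendstoUniformlyOn
    (F := fun n ξ => ∫ z, scaledKernel K (a (n + 1)) x z ∂(R ξ)) hA
    (fun u hu => (ha.comp (tendsto_add_atTop_nat 1)).eventually (huniform u hu))
    (fun n => ?_) (fun n => ?_) hmean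
  · obtain ⟨D, hD⟩ := hK.exists_abs_scaledKernel_le (a (n + 1)) x
    exact integrable_integral_kernel_comp (hX n).aemeasurable_fst (hK.measurable_scaledKernel _ x)
      hD
  · refine .of_bound (hrmeas.comp_aemeasurable (hX n).aemeasurable_fst).aestronglyMeasurable C
      (ae_of_all _ fun ω => ?_)
    simpa only [Real.norm_of_nonneg (hr0 _)] using hrC _

theorem IsSmoothingKernel.tendsto_integral_scaledKernel_mul_comp (hK : IsSmoothingKernel K δ ν)
    (ha : Tendsto a atTop (𝓝[>] 0)) {X Y : ℕ → Ω → V} {Q : Kernel V V} [IsMarkovKernel Q]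
    (hY : ∀ n, HasCondDistrib (Y n) (X n) Q P) {q : V → V → ℝ} {x y : V} {W : Set V}
    (hW : W ∈ 𝓝 y) (hQ : ∀ᶠ ξ in 𝓝 x, HasDensityOn (Q ξ) ν (q ξ) W) (hq0 : 0 ≤ q x y)
    (hq : ContinuousAt (Function.uncurry q) (x, y)) {c : ℝ}
    (hmean : Tendsto (fun n => ∫ ω, scaledKernel K (a n) x (X n ω) ∂P) atTop (𝓝 c)) :
    Tendsto (fun n => ∫ ω, scaledKernel K (a n) x (X n ω) * scaledKernel K (a n) y (Y n ω) ∂P)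
      atTop (𝓝 (c * q x y)) := by
  have hstep (n : ℕ) : ∫ ω, scaledKernel K (a n) x (X n ω) * scaledKernel K (a n) y (Y n ω) ∂P =
      ∫ ω, scaledKernel K (a n) x (X n ω) * ∫ z, scaledKernel K (a n) y z ∂Q (X n ω) ∂P := by
    obtain ⟨D, hD⟩ := hK.exists_abs_scaledKernel_le (a n) x
    obtain ⟨D', hD'⟩ := hK.exists_abs_scaledKernel_le (a n) y
    exact integral_mul_comp_of_hasCondDistrib (hY n) (hK.measurable_scaledKernel _ x)
      (hK.measurable_scaledKernel _ y) hD hD'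
  have hint (n : ℕ) : Integrable (fun ω =>
      scaledKernel K (a n) x (X n ω) * ∫ z, scaledKernel K (a n) y z ∂Q (X n ω)) P := by
    obtain ⟨D, hD⟩ := hK.exists_abs_scaledKernel_le (a n) x
    obtain ⟨D', hD'⟩ := hK.exists_abs_scaledKernel_le (a n) y
    exact (integrable_integral_kernel_comp (hY n).aemeasurable_fst
      (hK.measurable_scaledKernel _ y) hD').bdd_mul
      (hK.integrable_scaledKernel_comp (hY n).aemeasurable_fst _ x).aestronglyMeasurable
      (ae_of_all _ fun ω => hD _)
  have hlittle := hK.isLittleO_integral_scaledKernel_mul_sub ha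
    (fun n => (hY n).aemeasurable_fst) hint fun ε hε =>
      ha.eventually (hK.eventually_abs_integral_scaledKernel_sub_le hW hQ hq0 hq hε)
  have hdiff := (Asymptotics.isLittleO_one_iff ℝ).1 (hlittle.trans_isBigO (hmean.isBigO_one ℝ))
  simp_rw [hstep]
  simpa only [sub_add_cancel, zero_add] using hdiff.add (hmean.mul_const (q x y))

section PowerBandwidth

variable {u α : ℝ}

theorem tendsto_mul_add_one_rpow_neg (hu : 0 < u) (hα : 0 < α) :
    Tendsto (fun n : ℕ => u * ((n : ℝ) + 1) ^ (-α)) atTop (𝓝[>] 0) := by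
  refine tendsto_nhdsWithin_iff.2 ⟨?_, Eventually.of_forall fun n => ?_⟩
  · have hlim := (tendsto_rpow_neg_atTop hα).comp
      (tendsto_atTop_add_const_right atTop (1 : ℝ) tendsto_natCast_atTop_atTop)
    simpa only [mul_zero, Function.comp_apply] using hlim.const_mul u
  · exact Set.mem_Ioi.2 (by positivity)

theorem inv_mul_rpow_neg_pow {t : ℝ} (ht : 0 ≤ t) (k : ℕ) :
    ((u * t ^ (-α)) ^ k)⁻¹ = (u ^ k)⁻¹ * t ^ (α * k) := by
  rw [mul_pow, mul_inv, Real.rpow_neg ht, inv_pow, inv_inv, ← Real.rpow_mul_natCast ht]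

end PowerBandwidth

theorem sum_Icc_one_eq_sum_range {M : Type*} [AddCommMonoid M] (f : ℕ → M) (n : ℕ) :
    ∑ j ∈ Finset.Icc 1 n, f j = ∑ j ∈ Finset.range n, f (j + 1) := by
  rw [Finset.range_eq_Ico, Finset.sum_Ico_add' f 0 n 1]
  rfl

theorem tendsto_sum_Icc_div_sum_Icc {f g : ℕ → ℝ} {a b : ℝ} (hb : b ≠ 0)
    (hf : Tendsto (fun n : ℕ => (∑ j ∈ Finset.range n, f (j + 1)) / n) atTop (𝓝 a))
    (hg : Tendsto (fun n : ℕ => (∑ j ∈ Finset.range n, g (j + 1)) / n) atTop (𝓝 b)) :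
    Tendsto (fun n : ℕ => (∑ j ∈ Finset.Icc 1 (n + 1), f j) / ∑ j ∈ Finset.Icc 1 (n + 1), g j)
      atTop (𝓝 (a / b)) := by
  refine ((tendsto_add_atTop_iff_nat 1).2 (hf.div hg hb)).congr fun n => ?_
  rw [sum_Icc_one_eq_sum_range, sum_Icc_one_eq_sum_range]
  exact div_div_div_cancel_right₀ (by positivity) _ _

theorem equicontinuousAt_of_abs_sub_le_mul_dist {ι M : Type*} [PseudoMetricSpace M] {F : ι → M → ℝ}
    {x : M} {U : Set M} (hU : U ∈ 𝓝 x) {L : ℝ} (hF : ∀ i, ∀ z ∈ U, |F i z - F i x| ≤ L * dist z x) :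
    EquicontinuousAt F x := by
  have hlim : Tendsto (fun z => L * dist z x) (𝓝 x) (𝓝 0) := by
    simpa using (tendsto_iff_dist_tendsto_zero.1 (tendsto_id (x := 𝓝 x))).const_mul L
  refine Metric.equicontinuousAt_of_continuity_modulus _ hlim F ?_
  filter_upwards [hU] with z hz i
  rw [dist_comm, Real.dist_eq]
  exact hF i z hz

theorem continuous_uncurry_of_abs_sub_le_mul_dist {M N : Type*} [PseudoMetricSpace M]
    [PseudoMetricSpace N] {f : M → N → ℝ} {L : ℝ}
    (hf₁ : ∀ a a' b, |f a' b - f a b| ≤ L * dist a' a)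
    (hf₂ : ∀ a b b', |f a b' - f a b| ≤ L * dist b' b) : Continuous (Function.uncurry f) :=
  (LipschitzWith.uncurry (fun b => .of_dist_le' fun a' a => hf₁ a a' b)
    fun a => .of_dist_le' fun b' b => hf₂ a b b').continuous

theorem tendsto_mul_rpow_neg_natCast (c : ℝ) {ρ : ℝ} (hρ : 1 < ρ) :
    Tendsto (fun n : ℕ => c * ρ ^ (-(n : ℝ))) atTop (𝓝 0) := by
  have hρ0 : 0 < ρ := one_pos.trans hρ
  simp_rw [Real.rpow_neg hρ0.le, Real.rpow_natCast, ← inv_pow]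
  simpa only [mul_zero] using (tendsto_pow_atTop_nhds_zero_of_lt_one (inv_pos.2 hρ0).le
    (inv_lt_one_of_one_lt₀ hρ)).const_mul c

theorem stmt0_general {X Y : ℕ → Ω → V} (hX : ∀ n, Measurable (X n)) (hY : ∀ n, Measurable (Y n))
    {R Q : Kernel V V} [IsMarkovKernel R] [IsMarkovKernel Q]
    (hR : ∀ n, 1 ≤ n → HasCondDistrib (X (n + 1)) (X n) R P)
    (hQ : ∀ n, 1 ≤ n → HasCondDistrib (Y n) (X n) Q P)
    (hcov : HasGeometricCovDecay (fun n ω => (X (n + 1) ω, Y (n + 1) ω)) P)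
    {S : Set V} (hS : ∀ n, 1 ≤ n → ∀ ω, X n ω ∈ S) {π : Measure V} [IsFiniteMeasure π]
    {η : ℕ → ℝ} (hη : Tendsto η atTop (𝓝 0))
    (hRπ : ∀ n, 1 ≤ n → ∀ ξ ∈ S, ∀ B, MeasurableSet B → |((R ^ n) ξ).real B - π.real B| ≤ η n)
    {x y : V} {U W : Set V} (hU : U ∈ 𝓝 x) (hW : W ∈ 𝓝 y) {r q : V → V → ℝ}
    (hRr : ∀ ξ ∈ S, HasDensityOn (R ξ) ν (r ξ) U) (hr : EquicontinuousAt (fun ξ : S => r ξ) x)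
    (hrmeas : Measurable fun ξ => r ξ x) (hr0 : ∀ ξ, 0 ≤ r ξ x) {C : ℝ} (hrC : ∀ ξ, r ξ x ≤ C)
    (hQq : ∀ᶠ ξ in 𝓝 x, HasDensityOn (Q ξ) ν (q ξ) W) (hq0 : 0 ≤ q x y)
    (hq : ContinuousAt (Function.uncurry q) (x, y)) (hK : IsSmoothingKernel K δ ν)
    {v₁ w₁ α β : ℝ} (hv₁ : 0 < v₁) (hw₁ : 0 < w₁) (hα : 0 < α) (hβ : 0 < β)
    (hαd : α * finrank ℝ V < 1) (hβd : 2 * (β * finrank ℝ V) < 1)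
    {v w : ℕ → ℝ} (hv : ∀ j : ℕ, v j = v₁ * (j : ℝ) ^ (-α))
    (hw : ∀ j : ℕ, w j = w₁ * (j : ℝ) ^ (-β)) (hpx : 0 < ∫ ξ, r ξ x ∂π) :
    ∀ᵐ ω ∂P, Tendsto
      (fun n => (∑ j ∈ Finset.Icc 1 (n + 1),
          scaledKernel K (w j) x (X j ω) * scaledKernel K (w j) y (Y j ω)) /
        ∑ j ∈ Finset.Icc 1 (n + 1), scaledKernel K (v j) x (X j ω))
      atTop (𝓝 (q x y)) := by
  have hrmean : Tendsto (fun n => ∫ ω, r (X (n + 1) ω) x ∂P) atTop (𝓝 (∫ ξ, r ξ x ∂π)) :=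
    tendsto_integral_comp_of_tendsto_pow (X := fun n => X (n + 1)) (fun n => hR (n + 1) n.succ_pos)
      (hS 1 le_rfl) hη ((eventually_ge_atTop 1).mono hRπ) hrmeas hr0 hrC
  have hmean {a : ℕ → ℝ} (ha : Tendsto a atTop (𝓝[>] 0)) :=
    hK.tendsto_integral_scaledKernel_comp ha (fun n => hR (n + 1) n.succ_pos)
      (fun n => hS (n + 1) n.succ_pos) hU hRr hr hrmeas hr0 hrC hrmean
  have hden := hK.ae_tendsto_average_scaledKernel (fun n => by positivity) (by positivity) hαd
    (fun n => (inv_mul_rpow_neg_pow (u := v₁) (by positivity) _).le) (fun n => hX (n + 1))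
    (hcov.comp measurable_fst) (hmean (tendsto_mul_add_one_rpow_neg hv₁ hα))
  have hnum := hK.ae_tendsto_average_scaledKernel_mul (fun n => by positivity) (by positivity) hβd
    (fun n => (inv_mul_rpow_neg_pow (u := w₁) (by positivity) _).le) (fun n => hX (n + 1))
    (fun n => hY (n + 1)) hcov
    (hK.tendsto_integral_scaledKernel_mul_comp (tendsto_mul_add_one_rpow_neg hw₁ hβ)
      (fun n => hQ (n + 1) n.succ_pos) hW hQq hq0 hq (hmean (tendsto_mul_add_one_rpow_neg hw₁ hβ)))
  filter_upwards [hnum, hden] with ω hωnum hωden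
  rw [← mul_div_cancel_left₀ (q x y) hpx.ne']
  exact tendsto_sum_Icc_div_sum_Icc hpx.ne' (by simpa only [hw, Nat.cast_add_one] using hωnum)
    (by simpa only [hv, Nat.cast_add_one] using hωden)

end KernelEstimator

theorem stmt0
    {d : ℕ} (hd : 1 ≤ d)
    {Ω : Type*} [MeasurableSpace Ω] (P : Measure Ω) [IsProbabilityMeasure P]
    (E : Set (EuclideanSpace ℝ (Fin d))) (hEopen : IsOpen E) (hEne : E.Nonempty)
    (Zm : ℕ → Ω → (EuclideanSpace ℝ (Fin d))) (hZmmeas : ∀ n, Measurable (Zm n))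
    (hZmmem : ∀ n, 1 ≤ n → ∀ ω, Zm n ω ∈ closure E)
    (R : (EuclideanSpace ℝ (Fin d)) → Measure (EuclideanSpace ℝ (Fin d))) (hRprob : ∀ ξ, IsProbabilityMeasure (R ξ))
    (hRkermeas : ∀ B : Set (EuclideanSpace ℝ (Fin d)), MeasurableSet B → Measurable fun ξ => R ξ B)
    (hMarkov : ∀ n, 1 ≤ n → ∀ g : (EuclideanSpace ℝ (Fin d)) → ℝ, Measurable g → (∃ C, ∀ u, |g u| ≤ C) →
      P[fun ω => g (Zm (n+1) ω)|⨆ i : Fin n, MeasurableSpace.comap (Zm (i.1+1)) inferInstance]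
        =ᵐ[P] fun ω => ∫ u, g u ∂(R (Zm n ω)))
    (μ : Measure (EuclideanSpace ℝ (Fin d))) (hμprob : IsProbabilityMeasure μ)
    (ε : ℝ) (hε : 0 < ε) (k : ℕ) (hk : 1 ≤ k)
    (hDoeblin : ∀ ξ ∈ closure E, ∀ B : Set (EuclideanSpace ℝ (Fin d)), MeasurableSet B →
      ENNReal.ofReal ε * μ B ≤ iterK R k ξ B)
    (π : Measure (EuclideanSpace ℝ (Fin d))) (hπprob : IsProbabilityMeasure π)
    (hπinv : ∀ B : Set (EuclideanSpace ℝ (Fin d)), MeasurableSet B → π B = ∫⁻ ξ, R ξ B ∂π)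
    (κ ρ : ℝ) (hκ : 0 < κ) (hρ : 1 < ρ)
    (hTV : ∀ n : ℕ, 1 ≤ n → ∀ ξ ∈ closure E, ∀ B : Set (EuclideanSpace ℝ (Fin d)), MeasurableSet B →
      |(iterK R n ξ B).toReal - (π B).toReal| ≤ κ * ρ ^ (-(n:ℝ)))
    (r : (EuclideanSpace ℝ (Fin d)) → (EuclideanSpace ℝ (Fin d)) → ℝ) (hrmeas : Measurable (Function.uncurry r)) (hrnonneg : ∀ a b, 0 ≤ r a b)
    (Cr : ℝ) (hrbdd : ∀ a b, r a b ≤ Cr)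
    (rLip : ℝ) (hrLip : ∀ a : (EuclideanSpace ℝ (Fin d)), ∀ b ∈ E, ∀ b' ∈ E, |r a b' - r a b| ≤ rLip * dist b' b)
    (hRdens : ∀ ξ ∈ closure E, ∀ B : Set (EuclideanSpace ℝ (Fin d)), B ⊆ E → MeasurableSet B →
      R ξ B = ∫⁻ z in B, ENNReal.ofReal (r ξ z) ∂volume)
    (p : (EuclideanSpace ℝ (Fin d)) → ℝ) (hp : ∀ z ∈ E, p z = ∫ u, r u z ∂π)
    (K : (EuclideanSpace ℝ (Fin d)) → ℝ) (hKmeas : Measurable K) (hKnonneg : ∀ z, 0 ≤ K z)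
    (CK : ℝ) (hKbdd : ∀ z, K z ≤ CK) (hKint : ∫ z, K z ∂volume = 1)
    (δ : ℝ) (hδ : 0 < δ) (hKsupp : Function.support K ⊆ Metric.ball 0 δ)
    (v1 Alpha : ℝ) (hv1 : 0 < v1) (hAlpha : 0 < Alpha)
    (v : ℕ → ℝ) (hv : ∀ j : ℕ, v j = v1 * (j:ℝ) ^ (-Alpha))
    (Z : ℕ → Ω → (EuclideanSpace ℝ (Fin d))) (hZmeas : ∀ n, Measurable (Z n)) (hZmem : ∀ n, 1 ≤ n → ∀ ω, Z n ω ∈ E)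
    (Qm : (EuclideanSpace ℝ (Fin d)) → Measure (EuclideanSpace ℝ (Fin d))) (hQprob : ∀ ξ, IsProbabilityMeasure (Qm ξ))
    (q : (EuclideanSpace ℝ (Fin d)) → (EuclideanSpace ℝ (Fin d)) → ℝ) (hqmeas : Measurable (Function.uncurry q)) (hqnonneg : ∀ a b, 0 ≤ q a b)
    (Cq : ℝ) (hqbdd : ∀ a b, q a b ≤ Cq)
    (qLip : ℝ) (hqLip1 : ∀ a b b' : (EuclideanSpace ℝ (Fin d)), |q a b' - q a b| ≤ qLip * dist b' b)
    (hqLip2 : ∀ a a' b : (EuclideanSpace ℝ (Fin d)), |q a' b - q a b| ≤ qLip * dist a' a)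
    (hQdens : ∀ ξ : (EuclideanSpace ℝ (Fin d)), ∀ B : Set (EuclideanSpace ℝ (Fin d)), MeasurableSet B →
      Qm ξ B = ∫⁻ z in B, ENNReal.ofReal (q ξ z) ∂volume)
    (hZcond : ∀ n, 1 ≤ n → ∀ g : (EuclideanSpace ℝ (Fin d)) → ℝ, Measurable g → (∃ C, ∀ u, |g u| ≤ C) →
      P[fun ω => g (Z n ω)|(⨆ i : Fin n, MeasurableSpace.comap (Zm (i.1+1)) inferInstance) ⊔
          (⨆ i : Fin (n-1), MeasurableSpace.comap (Z (i.1+1)) inferInstance)]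
        =ᵐ[P] fun ω => ∫ u, g u ∂(Qm (Zm n ω)))
    (Bc bc : ℝ) (hBc : 0 < Bc) (hbc : 1 < bc)
    (hcov : ∀ g h : (EuclideanSpace ℝ (Fin d)) → (EuclideanSpace ℝ (Fin d)) → ℝ, Measurable (Function.uncurry g) → Measurable (Function.uncurry h) →
      (∀ a b, |g a b| ≤ 1) → (∀ a b, |h a b| ≤ 1) →
      ∀ m n : ℕ, 1 ≤ m → m ≤ n →
        |∫ ω, g (Zm m ω) (Z m ω) * h (Zm n ω) (Z n ω) ∂P -
          (∫ ω, g (Zm m ω) (Z m ω) ∂P) * (∫ ω, h (Zm n ω) (Z n ω) ∂P)| ≤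
          Bc * bc ^ (-((n:ℝ) - (m:ℝ))) * (1 + bc ^ (-(m:ℝ))))
    (w1 Beta : ℝ) (hw1 : 0 < w1) (hBeta : 0 < Beta)
    (w : ℕ → ℝ) (hw : ∀ j : ℕ, w j = w1 * (j:ℝ) ^ (-Beta))
    (x y : (EuclideanSpace ℝ (Fin d))) (hx : x ∈ E) (hy : y ∈ E)
    (hxdist : max v1 w1 * δ < Metric.infDist x (frontier E))
    (hydist : w1 * δ < Metric.infDist y (frontier E))
    (hpx : 0 < p x) (hαd : Alpha * d < 1) (hβd : 8 * Beta * d < 1) :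
    ∀ᵐ ω ∂P, Tendsto
      (fun n : ℕ => (∑ j ∈ Finset.Icc 1 (n+1), ((w j) ^ (2*d))⁻¹ * (K ((w j)⁻¹ • (Zm j ω - x)) * K ((w j)⁻¹ • (Z j ω - y)))) / (∑ j ∈ Finset.Icc 1 (n+1), ((v j) ^ d)⁻¹ * K ((v j)⁻¹ • (Zm j ω - x))))
      atTop (nhds (q x y)) := by
  let R' : Kernel _ _ := ⟨R, Measure.measurable_of_measurable_coe R hRkermeas⟩
  have hQ (ξ : EuclideanSpace ℝ (Fin d)) : HasDensityOn (Qm ξ) volume (q ξ) Set.univ :=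
    fun B _ => hQdens ξ B
  let Q' : Kernel _ _ := ⟨Qm, measurable_of_hasDensityOn_univ hqmeas hQ⟩
  have : IsMarkovKernel R' := ⟨hRprob⟩
  have : IsMarkovKernel Q' := ⟨hQprob⟩
  have hX (n : ℕ) (hn : 1 ≤ n) : HasCondDistrib (Zm (n + 1)) (Zm n) R' P :=
    hasCondDistrib_of_condExp_eq (iSup_comap_succ_le hZmmeas n)
      (measurable_iSup_comap_succ Zm hn) (hZmmeas _) (hMarkov n hn)
  have hY (n : ℕ) (hn : 1 ≤ n) : HasCondDistrib (Z n) (Zm n) Q' P :=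
    hasCondDistrib_of_condExp_eq
      (sup_le (iSup_comap_succ_le hZmmeas n) (iSup_comap_succ_le hZmeas _))
      ((measurable_iSup_comap_succ Zm hn).mono le_sup_left le_rfl) (hZmeas _) (hZcond n hn)
  have hdecay := hasGeometricCovDecay_succ (fun n => (hZmmeas n).prodMk (hZmeas n)) hBc.le hbc
    fun g h hg hh hg1 hh1 => hcov g.curry h.curry hg hh (fun a b => hg1 (a, b))
      fun a b => hh1 (a, b)
  have hE : E ∈ nhds x := hEopen.mem_nhds hx
  have hgeneral := stmt0_general hZmmeas hZmeas hX hY hdecay hZmmem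
    (tendsto_mul_rpow_neg_natCast κ hρ) (fun n hn => iterK_coe_eq_pow R' n ▸ hTV n hn) hE univ_mem
    hRdens (equicontinuousAt_of_abs_sub_le_mul_dist hE fun ξ => hrLip ξ x hx)
    (hrmeas.comp measurable_prodMk_right) (fun ξ => hrnonneg ξ x) (fun ξ => hrbdd ξ x)
    (.of_forall hQ) (hqnonneg x y)
    (continuous_uncurry_of_abs_sub_le_mul_dist hqLip2 hqLip1).continuousAt
    ⟨hKmeas, hKnonneg, ⟨CK, hKbdd⟩, hKsupp, hKint⟩ hv1 hw1 hAlpha hBeta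
    (by rwa [finrank_euclideanSpace_fin]) (by rw [finrank_euclideanSpace_fin]; nlinarith)
    hv hw (hp x hx ▸ hpx)
  simp_rw [scaledKernel_mul_scaledKernel, scaledKernel, finrank_euclideanSpace_fin] at hgeneral
  exact hgeneral
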